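/- Let x : ℕ → ℂ be a bounded sequence. Then the Knopp core of x admits the characterization ⋂_{k ∈ ℕ} closedConvexHull ℝ {x n : n ≥ k} = ⋂_{y ∈ ℂ} {z ∈ ℂ : ‖z - y‖ ≤ limsup_{n} ‖x n - y‖}, where the limsup is taken along atTop. -/

import Mathlib

/-!
In a Hilbert space, a bounded closed convex set is the intersection of the closed balls containing
it: a point off the set is strictly separated from it by a hyperplane, and moving the center of a
ball far away in the direction normal to that hyperplane makes its boundary flat enough to separate
as well. Consequently the core of `x` is the intersection of the closed balls that eventually
contain `x`, and for each center `y` the infimum of the radii of those balls is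
`limsup ‖x n - y‖`.
-/

open Filter Topology

section Separation

variable {E : Type*} [NormedAddCommGroup E] [InnerProductSpace ℝ E] {s : Set E} {z : E}

theorem exists_subset_closedBall_notMem_of_le_inner {w : E} {c : ℝ}
    (hs : Bornology.IsBounded s) (hc : 0 < c) (hw : ∀ p ∈ s, c ≤ inner ℝ (p - z) w) :
    ∃ y r, s ⊆ Metric.closedBall y r ∧ z ∉ Metric.closedBall y r := by
  rcases s.eq_empty_or_nonempty with rfl | ⟨q, hq⟩
  · exact ⟨z, -1, by simp⟩
  obtain ⟨M, hM, hsM⟩ := hs.subset_closedBall_lt 0 z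
  have hw_ne : w ≠ 0 := by
    rintro rfl
    exact (hc.trans_le (hw q hq)).ne' (inner_zero_right _)
  -- This choice makes the cross term of `‖(p - z) - t • w‖ ^ 2` at most `-2 * M ^ 2`, against
  -- `‖p - z‖ ^ 2 ≤ M ^ 2`.
  let t := M ^ 2 / c
  have ht_pos : 0 < t := by positivity
  have htw_pos : 0 < ‖t • w‖ := norm_pos_iff.2 (smul_ne_zero ht_pos.ne' hw_ne)
  refine ⟨z + t • w, √(‖t • w‖ ^ 2 - M ^ 2), fun p hp ↦ ?_, ?_⟩
  · have hpM : ‖p - z‖ ≤ M := mem_closedBall_iff_norm.1 (hsM hp)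
    have h_inner : M ^ 2 ≤ inner ℝ (p - z) (t • w) := by
      calc M ^ 2 = t * c := (div_mul_cancel₀ _ hc.ne').symm
        _ ≤ t * inner ℝ (p - z) w := by gcongr; exact hw p hp
        _ = inner ℝ (p - z) (t • w) := (real_inner_smul_right ..).symm
    rw [mem_closedBall_iff_norm, ← sub_sub]
    apply Real.le_sqrt_of_sq_le
    calc ‖p - z - t • w‖ ^ 2
        = ‖p - z‖ ^ 2 - 2 * inner ℝ (p - z) (t • w) + ‖t • w‖ ^ 2 := norm_sub_sq_real ..
      _ ≤ M ^ 2 - 2 * M ^ 2 + ‖t • w‖ ^ 2 := by gcongr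
      _ = ‖t • w‖ ^ 2 - M ^ 2 := by ring
  · rw [mem_closedBall_iff_norm, sub_add_cancel_left, norm_neg, not_le, Real.sqrt_lt' htw_pos]
    exact sub_lt_self _ (by positivity)

theorem exists_subset_closedBall_notMem_of_convex [CompleteSpace E] (h_conv : Convex ℝ s)
    (h_closed : IsClosed s) (h_bdd : Bornology.IsBounded s) (hz : z ∉ s) :
    ∃ y r, s ⊆ Metric.closedBall y r ∧ z ∉ Metric.closedBall y r := by
  obtain ⟨f, u, hfz, hfs⟩ := geometric_hahn_banach_point_closed h_conv h_closed hz
  refine exists_subset_closedBall_notMem_of_le_inner (w := (InnerProductSpace.toDual ℝ E).symm f)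
    h_bdd (sub_pos.2 hfz) fun p hp ↦ ?_
  rw [real_inner_comm, InnerProductSpace.toDual_symm_apply, map_sub]
  exact sub_le_sub_right (hfs p hp).le _

end Separation

section FilterCore

variable {ι E : Type*} [AddCommGroup E] [Module ℝ E] [TopologicalSpace E]

/-- The core of a family `x` along a filter `l`. The `𝓘`-core of an ideal `𝓘` is the core along the
filter of complements of members of `𝓘`; in particular the Knopp core of a sequence is its core
along `atTop`. -/
def filterCore (l : Filter ι) (x : ι → E) : Set E :=
  ⋂ s ∈ l, closedConvexHull ℝ (x '' s)

theorem filterCore_subset_of_eventually_mem {l : Filter ι} {x : ι → E} {K : Set E}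
    (h_conv : Convex ℝ K) (h_closed : IsClosed K) (hx : ∀ᶠ i in l, x i ∈ K) :
    filterCore l x ⊆ K :=
  (Set.biInter_subset_of_mem hx).trans <|
    closedConvexHull_min (Set.image_preimage_subset x K) h_conv h_closed

theorem filterCore_atTop_eq_iInter [Preorder ι] [IsDirectedOrder ι] [Nonempty ι] (x : ι → E) :
    filterCore atTop x = ⋂ k, closedConvexHull ℝ (x '' {n | k ≤ n}) := by
  have h_mono : Monotone fun s ↦ closedConvexHull ℝ (x '' s) :=
    (closedConvexHull ℝ).monotone.comp Set.monotone_image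
  exact (atTop_basis.biInter_mem h_mono).trans (Set.iInter_congr fun _ ↦ Set.iInter_true)

end FilterCore

theorem mem_filterCore_iff_forall_closedBall {ι E : Type*} [NormedAddCommGroup E]
    [InnerProductSpace ℝ E] [CompleteSpace E] {l : Filter ι} {x : ι → E} {z : E}
    (hx : IsBoundedUnder (· ≤ ·) l fun i ↦ ‖x i‖) :
    z ∈ filterCore l x ↔
      ∀ y r, (∀ᶠ i in l, x i ∈ Metric.closedBall y r) → z ∈ Metric.closedBall y r := by
  refine ⟨fun hz y r hr ↦ filterCore_subset_of_eventually_mem (convex_closedBall y r)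
    Metric.isClosed_closedBall hr hz, fun hz ↦ Set.mem_iInter₂.2 fun s hs ↦ ?_⟩
  obtain ⟨C, hC⟩ := hx.eventually_le
  let t := s ∩ {i | ‖x i‖ ≤ C}
  have ht : t ∈ l := inter_mem hs hC
  have h_bdd : Bornology.IsBounded (closedConvexHull ℝ (x '' t)) := by
    refine Metric.isBounded_closedBall.subset <| closedConvexHull_min ?_
      (convex_closedBall 0 C) Metric.isClosed_closedBall
    rintro _ ⟨i, hi, rfl⟩
    exact mem_closedBall_zero_iff.2 hi.2
  have hzt : z ∈ closedConvexHull ℝ (x '' t) := by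
    by_contra hzt
    obtain ⟨y, r, h_sub, hzr⟩ := exists_subset_closedBall_notMem_of_convex
      convex_closedConvexHull isClosed_closedConvexHull h_bdd hzt
    refine hzr (hz y r ?_)
    filter_upwards [ht] with i hi
    exact h_sub (subset_closedConvexHull (Set.mem_image_of_mem x hi))
  exact (closedConvexHull ℝ).monotone (Set.image_mono Set.inter_subset_left) hzt

theorem le_limsup_iff_forall_eventually_le {ι α : Type*} [ConditionallyCompleteLattice α]
    {l : Filter ι} {u : ι → α} {a : α} (h_cobdd : IsCoboundedUnder (· ≤ ·) l u)
    (h_bdd : IsBoundedUnder (· ≤ ·) l u) :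
    a ≤ limsup u l ↔ ∀ b, (∀ᶠ i in l, u i ≤ b) → a ≤ b := by
  rw [limsup_eq]
  exact le_csInf_iff h_cobdd h_bdd

theorem knopp_core_eq_iInter_limsup_balls_general {ι E : Type*} [NormedAddCommGroup E]
    [InnerProductSpace ℝ E] [CompleteSpace E] {l : Filter ι} [l.NeBot] {x : ι → E}
    (hx : IsBoundedUnder (· ≤ ·) l fun i ↦ ‖x i‖) :
    filterCore l x = ⋂ y : E, {z : E | ‖z - y‖ ≤ limsup (fun i ↦ ‖x i - y‖) l} := by
  have h_bdd (y : E) : IsBoundedUnder (· ≤ ·) l fun i ↦ ‖x i - y‖ :=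
    (isBoundedUnder_le_add hx (isBoundedUnder_const (a := ‖y‖))).mono_le
      (.of_forall fun i ↦ norm_sub_le (x i) y)
  have h_cobdd (y : E) : IsCoboundedUnder (· ≤ ·) l fun i ↦ ‖x i - y‖ :=
    isCoboundedUnder_le_of_le l fun _ ↦ norm_nonneg _
  ext z
  simp only [mem_filterCore_iff_forall_closedBall hx, Set.mem_iInter, Set.mem_ofPred_eq,
    le_limsup_iff_forall_eventually_le (h_cobdd _) (h_bdd _), mem_closedBall_iff_norm]

/-- Equation (1.2): the Knopp core of a bounded complex sequence `x` equals the
intersection over all `y ∈ ℂ` of the closed balls centered at `y` of radius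
`limsup_n ‖x n - y‖`. -/
theorem knopp_core_eq_iInter_limsup_balls
    (x : ℕ → ℂ) (hx : ∃ C : ℝ, ∀ n, ‖x n‖ ≤ C) :
    (⋂ k : ℕ, closedConvexHull ℝ (x '' {n : ℕ | k ≤ n})) =
      ⋂ y : ℂ, {z : ℂ | ‖z - y‖ ≤ limsup (fun n => ‖x n - y‖) atTop} := by
  rw [← filterCore_atTop_eq_iInter]
  exact knopp_core_eq_iInter_limsup_balls_general (isBoundedUnder_of hx)
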